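/- arXiv:1903.02341 — 6 statements merged into one kernel-verified Lean document; each statement's English description precedes it below -/
import Mathlib

section
/- Let δ ∈ (0,1). For each n ≥ 1 let B_n : C(2π) → C(2π) be the Bernstein operator on [−π,π], (B_n f)(x) = Σ_{k=0}^n f(−π + 2πk/n)·binom(n,k)·(x+π)^k (π−x)^{n−k}/(2π)^n (well-defined on C(2π) since f(−π) = f(π)), and let F_n : C(2π) → C(2π) be a bounded linear operator satisfying ‖F_n(g) − g‖∞ ≤ (δ/(1−δ))·‖g − B_n(g)‖∞ for all g ∈ C(2π). Then the set ⋃_{n≥1} F_n(R(2π)) is dense in C(2π). -/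
/-!
Trigonometric polynomials, which are rational trigonometric functions with denominator `1`,
are dense in `C(2π)`: a function in `C(2π)` descends to the circle `ℝ / 2πℤ`, where it is
uniformly approximated by complex combinations of the Fourier monomials, and the real part of such
a combination is a real trigonometric polynomial (`exists_trigPoly_near`).

For a fixed `t ∈ C(2π)` the Bernstein polynomials `B_n t` converge uniformly to `t`
(`tendsto_bern2pi`; the affine change of variable to `[0, 1]` reduces this to Bernstein's theorem),
so the hypothesis on the operators gives `F n t → t`. Given `f`, choose first a trigonometric
polynomial `t` close to `f`, and then `n` such that `F n t` is close to `t`.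
-/

open scoped Real

noncomputable section

abbrev Ipi : Set ℝ := Set.Icc (-Real.pi) Real.pi

lemma negPi_mem_Ipi : -Real.pi ∈ Ipi := ⟨le_rfl, neg_le_self Real.pi_pos.le⟩
lemma pi_mem_Ipi : Real.pi ∈ Ipi := ⟨neg_le_self Real.pi_pos.le, le_rfl⟩

/-- The space `C(2π)` of continuous functions on `[-π, π]` with equal values at the
endpoints, as a submodule of `C([-π,π], ℝ)`. -/
def C2pi : Submodule ℝ C(Ipi, ℝ) where
  carrier := {f | f ⟨-Real.pi, negPi_mem_Ipi⟩ = f ⟨Real.pi, pi_mem_Ipi⟩}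
  add_mem' := by
    intro f g hf hg
    simp only [Set.mem_setOf_eq, ContinuousMap.add_apply] at *
    rw [hf, hg]
  zero_mem' := rfl
  smul_mem' := by
    intro c f hf
    simp only [Set.mem_setOf_eq, ContinuousMap.smul_apply] at *
    rw [hf]

def trigCos (k : ℕ) : C(Ipi, ℝ) := ⟨fun x => Real.cos (k * (x : ℝ)), by fun_prop⟩
def trigSin (k : ℕ) : C(Ipi, ℝ) := ⟨fun x => Real.sin (k * (x : ℝ)), by fun_prop⟩

/-- Trigonometric polynomials of degree at most `m`. -/
def TrigPoly (m : ℕ) : Submodule ℝ C(Ipi, ℝ) :=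
  Submodule.span ℝ {f | ∃ k ≤ m, f = trigCos k ∨ f = trigSin k}

/-- Rational trigonometric functions of type `(m, n)`. -/
def RatTrig (m n : ℕ) : Set C2pi :=
  {t | ∃ p ∈ TrigPoly m, ∃ q ∈ TrigPoly n, (∀ x, 0 < q x) ∧
    ∀ x, (t : C(Ipi, ℝ)) x = p x / q x}

/-- The set `R(2π)` of all rational trigonometric functions. -/
def RatTrigAll : Set C2pi := ⋃ (m : ℕ), ⋃ (n : ℕ), RatTrig m n


/-- The Bernstein polynomial of a function in `C(2π)` on the interval `[-π, π]`:
`(B_n f)(x) = Σ_{k=0}^n f(-π + 2πk/n) · binom(n,k) · (x+π)^k (π-x)^{n-k} / (2π)^n`.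
(For `1 ≤ n` and `k ≤ n` the node `-π + 2πk/n` lies in `[-π, π]`, so the clamping
`Set.projIcc` is the identity on the nodes.) -/
def bern2pi (n : ℕ) (f : C2pi) : C(Ipi, ℝ) :=
  ⟨fun x => ∑ k ∈ Finset.range (n + 1),
      (f : C(Ipi, ℝ))
          (Set.projIcc (-Real.pi) Real.pi (neg_le_self Real.pi_pos.le)
            (-Real.pi + 2 * Real.pi * (k : ℝ) / (n : ℝ))) *
        (n.choose k : ℝ) * ((x : ℝ) + Real.pi) ^ k * (Real.pi - (x : ℝ)) ^ (n - k) /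
        (2 * Real.pi) ^ n,
   by fun_prop⟩

lemma trigPoly_mono {m n : ℕ} (h : m ≤ n) : TrigPoly m ≤ TrigPoly n :=
  Submodule.span_mono fun _ ⟨k, hk, hf⟩ => ⟨k, hk.trans h, hf⟩

lemma trigPoly_le_C2pi (m : ℕ) : TrigPoly m ≤ C2pi := by
  refine Submodule.span_le.2 ?_
  rintro f ⟨k, -, rfl | rfl⟩
  · change Real.cos (k * -Real.pi) = Real.cos (k * Real.pi)
    rw [mul_neg, Real.cos_neg]
  · change Real.sin (k * -Real.pi) = Real.sin (k * Real.pi)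
    rw [mul_neg, Real.sin_neg, Real.sin_nat_mul_pi, neg_zero]

instance fact_two_pi_pos : Fact (0 < 2 * Real.pi) := ⟨Real.two_pi_pos⟩

/-- The multiplier `c` makes the assertion stable under complex scalar multiplication, so that it
can be proved by induction on the span. -/
lemma exists_trigPoly_re (s : C(AddCircle (2 * Real.pi), ℂ))
    (hs : s ∈ Submodule.span ℂ (Set.range (@fourier (2 * Real.pi)))) :
    ∀ c : ℂ, ∃ m, ∃ p ∈ TrigPoly m, ∀ x : Ipi,
      p x = (c * s ((x : ℝ) : AddCircle (2 * Real.pi))).re := by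
  induction hs using Submodule.span_induction with
  | mem s hs =>
    obtain ⟨k, rfl⟩ := hs
    intro c
    have key : ∀ x : ℝ, (c * fourier k (x : AddCircle (2 * Real.pi))).re
        = c.re * Real.cos (k * x) - c.im * Real.sin (k * x) := by
      intro x
      have h : fourier k (x : AddCircle (2 * Real.pi))
          = Complex.exp (((k * x : ℝ) : ℂ) * Complex.I) := by
        rw [fourier_coe_apply]
        congr 1
        have : (Real.pi : ℂ) ≠ 0 := by exact_mod_cast Real.pi_ne_zero
        push_cast
        field_simp
      rw [h, Complex.mul_re, Complex.exp_ofReal_mul_I_re, Complex.exp_ofReal_mul_I_im]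
    have hc : trigCos k.natAbs ∈ TrigPoly k.natAbs :=
      Submodule.subset_span ⟨_, le_rfl, Or.inl rfl⟩
    have hs : trigSin k.natAbs ∈ TrigPoly k.natAbs :=
      Submodule.subset_span ⟨_, le_rfl, Or.inr rfl⟩
    rcases Int.natAbs_eq k with h | h
    · refine ⟨k.natAbs, c.re • trigCos k.natAbs - c.im • trigSin k.natAbs,
        Submodule.sub_mem _ (Submodule.smul_mem _ _ hc) (Submodule.smul_mem _ _ hs), fun x => ?_⟩
      have h' : (k : ℝ) = (k.natAbs : ℝ) := by
        rw [← Int.cast_natCast, ← h]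
      rw [key, h']
      rfl
    · refine ⟨k.natAbs, c.re • trigCos k.natAbs + c.im • trigSin k.natAbs,
        Submodule.add_mem _ (Submodule.smul_mem _ _ hc) (Submodule.smul_mem _ _ hs), fun x => ?_⟩
      have h' : (k : ℝ) = -(k.natAbs : ℝ) := by
        rw [← Int.cast_natCast, ← Int.cast_neg, ← h]
      rw [key, h', neg_mul, Real.cos_neg, Real.sin_neg, mul_neg, sub_neg_eq_add]
      rfl
  | zero => exact fun c => ⟨0, 0, Submodule.zero_mem _, fun x => by simp⟩
  | add s t _ _ ihs iht =>
    intro c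
    obtain ⟨m, p, hp, hpx⟩ := ihs c
    obtain ⟨n, q, hq, hqx⟩ := iht c
    refine ⟨max m n, p + q, Submodule.add_mem _ (trigPoly_mono (le_max_left _ _) hp)
      (trigPoly_mono (le_max_right _ _) hq), fun x => ?_⟩
    simp [hpx, hqx, mul_add]
  | smul a s _ ih =>
    intro c
    obtain ⟨m, p, hp, hpx⟩ := ih (c * a)
    refine ⟨m, p, hp, fun x => ?_⟩
    rw [hpx, ContinuousMap.smul_apply, smul_eq_mul, mul_assoc]

lemma exists_circle_lift (f : C2pi) : ∃ g : C(AddCircle (2 * Real.pi), ℂ), ∀ x : Ipi,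
    g ((x : ℝ) : AddCircle (2 * Real.pi)) = ((f : C(Ipi, ℝ)) x : ℂ) := by
  have hle : -Real.pi ≤ Real.pi := neg_le_self Real.pi_pos.le
  have hend : -Real.pi + 2 * Real.pi = Real.pi := by ring
  let e : ℝ → ℂ := fun x => ((f : C(Ipi, ℝ)) (Set.projIcc _ _ hle x) : ℂ)
  have hec : Continuous e := by
    have := (f : C(Ipi, ℝ)).continuous.comp (continuous_projIcc (h := hle))
    exact Complex.continuous_ofReal.comp this
  have he : ∀ x : Ipi, e x = ((f : C(Ipi, ℝ)) x : ℂ) := fun x => by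
    simp only [e, Set.projIcc_val]
  have hper : e (-Real.pi) = e Real.pi := by
    rw [he ⟨_, negPi_mem_Ipi⟩, he ⟨_, pi_mem_Ipi⟩]
    exact congrArg _ f.2
  have hcont : Continuous (AddCircle.liftIco (2 * Real.pi) (-Real.pi) e) :=
    AddCircle.liftIco_continuous (by rw [hend, hper]) hec.continuousOn
  refine ⟨⟨_, hcont⟩, fun x => ?_⟩
  rw [← he, ContinuousMap.coe_mk]
  rcases x.2.2.lt_or_eq with h | h
  · exact AddCircle.liftIco_coe_apply ⟨x.2.1, by rwa [hend]⟩
  · have hx : ((x : ℝ) : AddCircle (2 * Real.pi)) = ((-Real.pi : ℝ) : AddCircle (2 * Real.pi)) := by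
      rw [h, ← AddCircle.coe_add_period (2 * Real.pi) (-Real.pi), hend]
    rw [hx, AddCircle.liftIco_coe_apply ⟨le_rfl, by linarith [Real.pi_pos]⟩, hper, h]

lemma exists_trigPoly_near (f : C2pi) {ε : ℝ} (hε : 0 < ε) :
    ∃ m, ∃ t : C2pi, (t : C(Ipi, ℝ)) ∈ TrigPoly m ∧ ‖t - f‖ < ε := by
  obtain ⟨g, hg⟩ := exists_circle_lift f
  have hmem : g ∈ closure (Submodule.span ℂ (Set.range (@fourier (2 * Real.pi))) :
      Set C(AddCircle (2 * Real.pi), ℂ)) := by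
    rw [← Submodule.topologicalClosure_coe, span_fourier_closure_eq_top]
    trivial
  obtain ⟨s, hs, hsd⟩ := Metric.mem_closure_iff.1 hmem ε hε
  obtain ⟨m, p, hp, hpx⟩ := exists_trigPoly_re s hs 1
  refine ⟨m, ⟨p, trigPoly_le_C2pi m hp⟩, hp, ?_⟩
  change ‖p - (f : C(Ipi, ℝ))‖ < ε
  refine (ContinuousMap.norm_lt_iff _ hε).2 fun x => ?_
  have h1 : (p - (f : C(Ipi, ℝ))) x
      = ((s - g) ((x : ℝ) : AddCircle (2 * Real.pi))).re := by
    simp [hpx, hg]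
  rw [h1]
  refine (Complex.abs_re_le_norm _).trans_lt (((s - g).norm_coe_le_norm _).trans_lt ?_)
  rwa [← dist_eq_norm, dist_comm]

/-- Under `u ↦ -π + 2πu` the operator `bern2pi` becomes the Bernstein operator on `[0, 1]`. -/
lemma tendsto_bern2pi (f : C2pi) :
    Filter.Tendsto (fun n => ‖(f : C(Ipi, ℝ)) - bern2pi n f‖) Filter.atTop (nhds 0) := by
  have hle : -Real.pi ≤ Real.pi := neg_le_self Real.pi_pos.le
  have hpi := Real.pi_pos
  let φ : C(unitInterval, Ipi) :=
    ⟨fun u => Set.projIcc _ _ hle (-Real.pi + 2 * Real.pi * u),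
      continuous_projIcc.comp (by fun_prop)⟩
  have hφ : ∀ u : unitInterval, ((φ u : Ipi) : ℝ) = -Real.pi + 2 * Real.pi * u := by
    intro u
    have h0 := u.2.1
    have h1 := u.2.2
    exact congrArg Subtype.val (Set.projIcc_of_mem hle
      (⟨by nlinarith, by nlinarith⟩ : -Real.pi + 2 * Real.pi * (u : ℝ) ∈ Ipi))
  let h : C(unitInterval, ℝ) := (f : C(Ipi, ℝ)).comp φ
  have hB : ∀ n u, bern2pi n f (φ u) = bernsteinApproximation n h u := by
    intro n u
    rw [bernsteinApproximation.apply, bern2pi, ContinuousMap.coe_mk]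
    refine Eq.trans ?_ (Fin.sum_univ_eq_sum_range
      (fun k => bernstein n k u • (f : C(Ipi, ℝ))
        (Set.projIcc (-Real.pi) Real.pi hle (-Real.pi + 2 * Real.pi * ((k : ℝ) / n))))
      (n + 1)).symm
    refine Finset.sum_congr rfl fun k hk => ?_
    have hkn : k ≤ n := Nat.lt_succ_iff.1 (Finset.mem_range.1 hk)
    rw [hφ, bernstein_apply, smul_eq_mul, mul_div_assoc (2 * Real.pi)]
    have e1 : -Real.pi + 2 * Real.pi * (u : ℝ) + Real.pi = 2 * Real.pi * u := by ring
    have e2 : Real.pi - (-Real.pi + 2 * Real.pi * (u : ℝ)) = 2 * Real.pi * (1 - u) := by ring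
    have e3 : (2 * Real.pi) ^ n = (2 * Real.pi) ^ k * (2 * Real.pi) ^ (n - k) := by
      rw [← pow_add, Nat.add_sub_cancel' hkn]
    rw [e1, e2, e3, mul_pow _ (u : ℝ), mul_pow _ (1 - (u : ℝ))]
    field_simp
  have hlim := tendsto_iff_norm_sub_tendsto_zero.1 (bernsteinApproximation_uniform h)
  refine squeeze_zero (fun _ => norm_nonneg _) (fun n => ?_) hlim
  refine (ContinuousMap.norm_le _ (norm_nonneg _)).2 fun x => ?_
  -- the preimage of `x` under the change of variable
  have hu : ((x : ℝ) + Real.pi) / (2 * Real.pi) ∈ unitInterval := by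
    have h0 := x.2.1
    have h1 := x.2.2
    exact ⟨div_nonneg (by linarith) (by linarith), (div_le_one (by linarith)).2 (by linarith)⟩
  have hx : φ ⟨_, hu⟩ = x := by
    apply Subtype.ext
    rw [hφ]
    field_simp
    ring
  have := (bernsteinApproximation n h - h).norm_coe_le_norm ⟨_, hu⟩
  have hhx : h ⟨_, hu⟩ = (f : C(Ipi, ℝ)) x := congrArg (f : C(Ipi, ℝ)) hx
  rwa [ContinuousMap.sub_apply, ← hB, hx, norm_sub_rev, hhx] at this

theorem stmt2 (δ : ℝ) (hδ : δ ∈ Set.Ioo (0 : ℝ) 1)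
    (F : ℕ → (C2pi →L[ℝ] C2pi))
    (hF : ∀ n, 1 ≤ n → ∀ g : C2pi,
      ‖F n g - g‖ ≤ δ / (1 - δ) * ‖(g : C(Ipi, ℝ)) - bern2pi n g‖) :
    Dense (⋃ n, ⋃ (_ : 1 ≤ n), (fun t => F n t) '' RatTrigAll) := by
  intro f
  refine Metric.mem_closure_iff.2 fun ε hε => ?_
  obtain ⟨m, t, ht, htf⟩ := exists_trigPoly_near f (half_pos hε)
  have hlim := (tendsto_bern2pi t).const_mul (δ / (1 - δ))
  rw [mul_zero] at hlim
  obtain ⟨n, hn, hn1⟩ := ((hlim.eventually (gt_mem_nhds (half_pos hε))).and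
    (Filter.eventually_ge_atTop 1)).exists
  have htR : t ∈ RatTrigAll := by
    refine Set.mem_iUnion₂.2 ⟨m, 0, t, ht, trigCos 0,
      Submodule.subset_span ⟨0, le_rfl, Or.inl rfl⟩, ?_, ?_⟩ <;> simp [trigCos]
  refine ⟨F n t, Set.mem_iUnion₂.2 ⟨n, hn1, t, htR, rfl⟩, ?_⟩
  have h1 : dist (F n t) t < ε / 2 := by
    rw [dist_eq_norm]
    exact (hF n hn1 t).trans_lt hn
  have h2 : dist t f < ε / 2 := by rwa [dist_eq_norm]
  rw [dist_comm]
  linarith [dist_triangle (F n t) t f]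
end
end

section
/- Let I = [a,b] be a compact interval, let δ ∈ (0,1), c ≥ 0, and let F : C(I) → C(I) be a bounded linear operator satisfying ‖F(g) − g‖∞ ≤ (δ/(1−δ))·c·‖g‖∞ for all g ∈ C(I). Then for every f ∈ C(I) and all nonnegative integers m, n, dist(f, F(R_{mn}(I))) ≤ dist(f, R_{mn}(I)) + (δ·c/(1−δ))·(dist(f, R_{mn}(I)) + ‖f‖∞). -/
/-!
Put `K = δ c / (1 - δ)`. For every rational function `t` of type `(m, n)`,
`‖f - F t‖ ≤ ‖f - t‖ + ‖t - F t‖ ≤ ‖f - t‖ + K ‖t‖ ≤ ‖f - t‖ + K (‖f - t‖ + ‖f‖)`,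
and the bound follows by taking the infimum over `t`.
-/

noncomputable section

/-- Rational functions of type `(m, n)` on the interval `[a, b]`: quotients `p/q` of real
polynomials with `deg p ≤ m`, `deg q ≤ n` and `q > 0` on `[a, b]`, viewed as elements of
`C([a, b], ℝ)`. -/
def RatPoly (a b : ℝ) (m n : ℕ) : Set C(Set.Icc a b, ℝ) :=
  {t | ∃ p q : Polynomial ℝ, p.natDegree ≤ m ∧ q.natDegree ≤ n ∧
    (∀ x : Set.Icc a b, 0 < q.eval (x : ℝ)) ∧
    ∀ x : Set.Icc a b, t x = p.eval (x : ℝ) / q.eval (x : ℝ)}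

theorem stmt9 (a b : ℝ) (hab : a ≤ b) (δ c : ℝ) (hδ : δ ∈ Set.Ioo (0 : ℝ) 1) (hc : 0 ≤ c)
    (F : C(Set.Icc a b, ℝ) →L[ℝ] C(Set.Icc a b, ℝ))
    (hF : ∀ g : C(Set.Icc a b, ℝ), ‖F g - g‖ ≤ δ / (1 - δ) * c * ‖g‖)
    (f : C(Set.Icc a b, ℝ)) (m n : ℕ) :
    Metric.infDist f ((fun t => F t) '' RatPoly a b m n) ≤
      Metric.infDist f (RatPoly a b m n) +
        δ * c / (1 - δ) * (Metric.infDist f (RatPoly a b m n) + ‖f‖) := by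
  obtain ⟨hδ0, hδ1⟩ := hδ
  have hne : (RatPoly a b m n).Nonempty := ⟨0, 0, 1, by simp, by simp, by simp, by simp⟩
  obtain ⟨K, hK⟩ : ∃ K, K = δ * c / (1 - δ) := ⟨_, rfl⟩
  have hK0 : 0 ≤ K := by
    rw [hK]
    exact div_nonneg (mul_nonneg hδ0.le hc) (by linarith)
  have hFK : ∀ g, ‖F g - g‖ ≤ K * ‖g‖ := fun g => by
    rw [hK, mul_div_right_comm]
    exact hF g
  rw [← hK]
  -- Dividing by `1 + K` turns the claim into a lower bound for `dist(f, R_{mn})`,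
  -- which can be checked on each rational function `t` separately.
  have key : (Metric.infDist f ((fun t => F t) '' RatPoly a b m n) - K * ‖f‖) / (1 + K) ≤
      Metric.infDist f (RatPoly a b m n) := by
    refine (Metric.le_infDist hne).2 fun t ht => ?_
    rw [div_le_iff₀ (by linarith), dist_eq_norm]
    have h1 : Metric.infDist f ((fun t => F t) '' RatPoly a b m n) ≤ dist f (F t) :=
      Metric.infDist_le_dist_of_mem (Set.mem_image_of_mem _ ht)
    have h2 : dist f (F t) ≤ ‖f - t‖ + ‖F t - t‖ := by
      rw [dist_eq_norm, norm_sub_rev (F t) t]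
      exact norm_sub_le_norm_sub_add_norm_sub f t (F t)
    have h3 : ‖t‖ ≤ ‖f‖ + ‖f - t‖ := norm_le_norm_add_norm_sub f t
    have h4 := mul_le_mul_of_nonneg_left h3 hK0
    linarith [hFK t]
  rw [div_le_iff₀ (by linarith)] at key
  linarith
end
end

section
/- Let δ ∈ (0,1). For each n ≥ 1 let B_n : C([0,1]) → C([0,1]) be the n-th Bernstein operator, (B_n g)(x) = Σ_{k=0}^n g(k/n)·binom(n,k)·x^k (1−x)^{n−k}, and let F_n : C([0,1]) → C([0,1]) be a bounded linear operator satisfying ‖F_n(g) − g‖∞ ≤ (δ/(1−δ))·‖g − B_n(g)‖∞ for all g ∈ C([0,1]). Fix nonnegative integers l, m. Then for every f ∈ C([0,1]), dist(f, ⋃_{n≥1} F_n(R_{l,m}([0,1]))) ≤ dist(f, R_{l,m}([0,1])). -/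
/-! For a fixed rational function `t`, Bernstein's theorem gives `B_n t → t` uniformly, so the
hypothesis on `F` forces `F n t → t`. Hence `dist f t` is the limit of upper bounds for the
distance from `f` to the union of the images; take the infimum over `t`. -/

open unitInterval

noncomputable section

/-- Rational functions of type `(l, m)` on `[0, 1]`: quotients `p/q` of real polynomials with
`deg p ≤ l`, `deg q ≤ m` and `q > 0` on `[0, 1]`, viewed as elements of `C([0, 1], ℝ)`. -/
def RatPoly01 (l m : ℕ) : Set C(I, ℝ) :=
  {t | ∃ p q : Polynomial ℝ, p.natDegree ≤ l ∧ q.natDegree ≤ m ∧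
    (∀ x : I, 0 < q.eval (x : ℝ)) ∧
    ∀ x : I, t x = p.eval (x : ℝ) / q.eval (x : ℝ)}

theorem stmt10 (δ : ℝ) (hδ : δ ∈ Set.Ioo (0 : ℝ) 1)
    (F : ℕ → (C(I, ℝ) →L[ℝ] C(I, ℝ)))
    (hF : ∀ n, 1 ≤ n → ∀ g : C(I, ℝ),
      ‖F n g - g‖ ≤ δ / (1 - δ) * ‖g - bernsteinApproximation n g‖)
    (l m : ℕ) (f : C(I, ℝ)) :
    Metric.infDist f (⋃ n, ⋃ (_ : 1 ≤ n), (fun t => F n t) '' RatPoly01 l m) ≤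
      Metric.infDist f (RatPoly01 l m) := by
  have hne : (RatPoly01 l m).Nonempty :=
    ⟨0, 0, 1, by simp, by simp, by simp, by simp⟩
  rw [Metric.le_infDist hne]
  intro t ht
  have hB : Filter.Tendsto (fun n => δ / (1 - δ) * ‖t - bernsteinApproximation n t‖)
      Filter.atTop (nhds 0) := by
    have h := ((tendsto_const_nhds (x := t)).sub (bernsteinApproximation_uniform t)).norm
    simpa using h.const_mul (δ / (1 - δ))
  have hlim : Filter.Tendsto
      (fun n => dist f t + δ / (1 - δ) * ‖t - bernsteinApproximation n t‖)
      Filter.atTop (nhds (dist f t)) := by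
    simpa using hB.const_add (dist f t)
  refine ge_of_tendsto hlim ?_
  filter_upwards [Filter.eventually_ge_atTop 1] with n hn
  have hmem : F n t ∈ ⋃ n, ⋃ (_ : 1 ≤ n), (fun t => F n t) '' RatPoly01 l m :=
    Set.mem_iUnion₂.2 ⟨n, hn, t, ht, rfl⟩
  calc Metric.infDist f (⋃ n, ⋃ (_ : 1 ≤ n), (fun t => F n t) '' RatPoly01 l m)
      ≤ dist f (F n t) := Metric.infDist_le_dist_of_mem hmem
    _ ≤ dist f t + dist t (F n t) := dist_triangle _ _ _
    _ ≤ dist f t + δ / (1 - δ) * ‖t - bernsteinApproximation n t‖ := by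
      rw [dist_comm t, dist_eq_norm (F n t)]
      gcongr
      exact hF n hn t
end
end

section
/- Let f ∈ C([0,1]) and δ ∈ (0,1). For each n ≥ 1 let B_n : C([0,1]) → C([0,1]) be the n-th Bernstein operator, (B_n g)(x) = Σ_{k=0}^n g(k/n)·binom(n,k)·x^k (1−x)^{n−k}, write p_n = B_n(f), and suppose g_n ∈ C([0,1]) satisfies ‖g_n − p_n‖∞ ≤ (δ/(1−δ))·‖p_n − B_n(p_n)‖∞. Then ‖g_n − f‖∞ → 0 as n → ∞. -/
/-! The Bernstein operator `B_n` is a linear contraction for the sup norm, since its weights are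
nonnegative and sum to `1`. As `p_n = B_n f`, this gives
`‖p_n - B_n p_n‖ = ‖B_n (f - p_n)‖ ≤ ‖p_n - f‖`, hence
`‖g_n - f‖ ≤ (δ / (1 - δ) + 1) * ‖p_n - f‖`, which tends to `0` by Bernstein's theorem
`bernsteinApproximation_uniform`. -/

open unitInterval

noncomputable section

theorem norm_bernsteinApproximation_sub_le (n : ℕ) (u v : C(I, ℝ)) :
    ‖bernsteinApproximation n u - bernsteinApproximation n v‖ ≤ ‖u - v‖ := by
  refine (ContinuousMap.norm_le _ (norm_nonneg _)).2 fun x => ?_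
  rw [ContinuousMap.sub_apply, bernsteinApproximation.apply, bernsteinApproximation.apply,
    ← Finset.sum_sub_distrib]
  calc ‖∑ k : Fin (n + 1), (bernstein n k x • u (bernstein.z k)
          - bernstein n k x • v (bernstein.z k))‖
      ≤ ∑ k : Fin (n + 1), bernstein n k x * ‖u - v‖ := by
        refine norm_sum_le_of_le _ fun k _ => ?_
        rw [← smul_sub, norm_smul, Real.norm_of_nonneg bernstein_nonneg]
        exact mul_le_mul_of_nonneg_left ((u - v).norm_coe_le_norm _) bernstein_nonneg
    _ = ‖u - v‖ := by rw [← Finset.sum_mul, bernstein.probability, one_mul]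

theorem stmt12 (f : C(I, ℝ)) (δ : ℝ) (hδ : δ ∈ Set.Ioo (0 : ℝ) 1)
    (p : ℕ → C(I, ℝ)) (hp : ∀ n, p n = bernsteinApproximation n f)
    (g : ℕ → C(I, ℝ))
    (hg : ∀ n, 1 ≤ n →
      ‖g n - p n‖ ≤ δ / (1 - δ) * ‖p n - bernsteinApproximation n (p n)‖) :
    Filter.Tendsto (fun n => ‖g n - f‖) Filter.atTop (nhds 0) := by
  have hlim : Filter.Tendsto (fun n => (δ / (1 - δ) + 1) * ‖p n - f‖) Filter.atTop (nhds 0) := by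
    simp only [hp]
    simpa using (tendsto_iff_norm_sub_tendsto_zero.1
      (bernsteinApproximation_uniform f)).const_mul (δ / (1 - δ) + 1)
  refine squeeze_zero' (Filter.Eventually.of_forall fun n => norm_nonneg _) ?_ hlim
  filter_upwards [Filter.eventually_ge_atTop 1] with n hn
  have hc : 0 ≤ δ / (1 - δ) := div_nonneg hδ.1.le (sub_nonneg.2 hδ.2.le)
  have hB : ‖p n - bernsteinApproximation n (p n)‖ ≤ ‖p n - f‖ := by
    have h := norm_bernsteinApproximation_sub_le n f (p n)
    rwa [← hp n, norm_sub_rev f] at h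
  calc ‖g n - f‖ ≤ ‖g n - p n‖ + ‖p n - f‖ := norm_sub_le_norm_sub_add_norm_sub _ _ _
    _ ≤ δ / (1 - δ) * ‖p n - f‖ + ‖p n - f‖ := by
        gcongr
        exact (hg n hn).trans (mul_le_mul_of_nonneg_left hB hc)
    _ = (δ / (1 - δ) + 1) * ‖p n - f‖ := by ring
end
end

section
/- Let I = [a,b] be a compact interval and δ ∈ (0,1). For each n ∈ ℕ let B_n : C(I) → C(I) be a bounded linear operator with ‖B_n‖ ≤ 1, and let F_n : C(I) → C(I) be a linear map satisfying ‖F_n(h) − h‖∞ ≤ (δ/(1−δ))·‖h − B_n(h)‖∞ for all h ∈ C(I). Define the set-valued map T : C(I) → Set(C(I)) by T(f) = {F_n(f) : n ∈ ℕ}. Then: (i) T(λ·f) = λ·T(f) (elementwise scalar multiple) for every λ > 0 and every f ∈ C(I), and T(0) = {0}, so that T is a process; and (ii) for all f, g ∈ C(I), T(g) ⊆ T(f) + {h ∈ C(I) : ‖h‖∞ ≤ ((1+δ)/(1−δ))·‖f − g‖∞} (Minkowski sum), so that T is Lipschitz with constant (1+δ)/(1−δ). -/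
/-!
Homogeneity and `T 0 = {0}` are immediate from the linearity of each `F n`. The Lipschitz estimate
reduces, again by linearity, to the bound `‖F n h‖ ≤ (1 + δ) / (1 - δ) * ‖h‖`, uniform in `n`:
the points `F n f` and `F n g` with the same index differ by `F n (g - f)`.
-/

open scoped Pointwise

noncomputable section

theorem stmt14 (a b : ℝ) (hab : a ≤ b) (δ : ℝ) (hδ : δ ∈ Set.Ioo (0 : ℝ) 1)
    (B : ℕ → (C(Set.Icc a b, ℝ) →L[ℝ] C(Set.Icc a b, ℝ))) (hB : ∀ n, ‖B n‖ ≤ 1)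
    (F : ℕ → (C(Set.Icc a b, ℝ) →ₗ[ℝ] C(Set.Icc a b, ℝ)))
    (hF : ∀ n, ∀ h : C(Set.Icc a b, ℝ), ‖F n h - h‖ ≤ δ / (1 - δ) * ‖h - B n h‖)
    (T : C(Set.Icc a b, ℝ) → Set C(Set.Icc a b, ℝ))
    (hT : ∀ f, T f = Set.range fun n => F n f) :
    ((∀ lam : ℝ, 0 < lam → ∀ f, T (lam • f) = lam • T f) ∧ T 0 = {0}) ∧
    (∀ f g : C(Set.Icc a b, ℝ),
      T g ⊆ T f + {h : C(Set.Icc a b, ℝ) | ‖h‖ ≤ (1 + δ) / (1 - δ) * ‖f - g‖}) := by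
  obtain ⟨hδ0, hδ1⟩ := hδ
  have h1 : 0 < 1 - δ := by linarith
  -- `‖F n h‖ ≤ ‖h‖ + δ / (1 - δ) * (2 * ‖h‖)`, since `‖B n‖ ≤ 1` gives `‖h - B n h‖ ≤ 2 * ‖h‖`.
  have key : ∀ n (h : C(Set.Icc a b, ℝ)), ‖F n h‖ ≤ (1 + δ) / (1 - δ) * ‖h‖ := by
    intro n h
    have hBh : ‖B n h‖ ≤ ‖h‖ := by
      simpa using (B n).le_of_opNorm_le (hB n) h
    have hsub : ‖h - B n h‖ ≤ 2 * ‖h‖ := by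
      linarith [norm_sub_le h (B n h)]
    calc ‖F n h‖ = ‖(F n h - h) + h‖ := by rw [sub_add_cancel]
      _ ≤ ‖F n h - h‖ + ‖h‖ := norm_add_le _ _
      _ ≤ δ / (1 - δ) * (2 * ‖h‖) + ‖h‖ := by
        have := mul_le_mul_of_nonneg_left hsub (div_pos hδ0 h1).le
        linarith [hF n h]
      _ = (1 + δ) / (1 - δ) * ‖h‖ := by
        field_simp
        ring
  refine ⟨⟨?_, ?_⟩, ?_⟩
  · intro lam _ f
    rw [hT, hT, Set.smul_set_range]
    simp only [map_smul]
  · rw [hT]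
    simp only [map_zero, Set.range_const]
  · intro f g
    rw [hT, hT]
    rintro _ ⟨n, rfl⟩
    -- The same index `n` serves for `f`, with remainder `F n (g - f)`.
    refine Set.mem_add.mpr ⟨F n f, ⟨n, rfl⟩, F n (g - f), ?_, ?_⟩
    · rw [Set.mem_ofPred_eq, norm_sub_rev f g]
      exact key n (g - f)
    · simp only [map_sub, add_sub_cancel]
end
end

section
/- Let I = [a,b] be a compact interval with a < b, let δ ∈ (0,1), let L : C(I) → C(I) be a bounded linear operator with ‖L‖ ≤ 1, and let F : C(I) → C(I) be a bounded linear operator satisfying ‖g − F(g)‖∞ ≤ δ·‖F(g) − L(g)‖∞ for all g ∈ C(I). Then F is bounded below with ((1−δ)/(1+δ))·‖g‖∞ ≤ ‖F(g)‖∞ for all g ∈ C(I), and F is not a compact operator. -/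
/-!
Since `g = (g - F g) + F g` and `‖g - F g‖ ≤ δ (‖F g‖ + ‖g‖)`, one gets
`(1 - δ) ‖g‖ ≤ (1 + δ) ‖F g‖`. A continuous linear map on a Banach space that is bounded below is
a closed embedding, so preimages of compact sets under it are compact; if it were also compact,
the domain would have a compact neighbourhood of `0` and hence be finite-dimensional by Riesz.
But `C([a, b], ℝ)` contains a copy of the space of all polynomials.
-/

noncomputable section

/-- Distinct polynomials restrict to distinct functions on the infinite set `[a, b]`, so
`ℝ[X]` embeds linearly in `C([a, b], ℝ)`. -/
lemma not_finiteDimensional_continuousMap_Icc {a b : ℝ} (hab : a < b) :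
    ¬ FiniteDimensional ℝ C(Set.Icc a b, ℝ) := by
  intro h
  have hinj : Function.Injective
      (Polynomial.toContinuousMapOnAlgHom (R := ℝ) (Set.Icc a b)).toLinearMap := by
    intro p q hpq
    refine Polynomial.eq_of_infinite_eval_eq p q ((Set.Icc_infinite hab).mono fun x hx => ?_)
    exact DFunLike.congr_fun hpq (⟨x, hx⟩ : Set.Icc a b)
  exact Polynomial.not_finite (Module.Finite.of_injective _ hinj)

lemma not_isCompactOperator_of_antilipschitz {E : Type*} [NormedAddCommGroup E]
    [NormedSpace ℝ E] [CompleteSpace E] (hE : ¬ FiniteDimensional ℝ E) (F : E →L[ℝ] E)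
    {K : NNReal} (hF : AntilipschitzWith K F) : ¬ IsCompactOperator F := by
  rintro ⟨S, hS, hS0⟩
  have hpre : IsCompact (F ⁻¹' S) :=
    (hF.isClosedEmbedding F.uniformContinuous).isCompact_preimage hS
  exact hE (FiniteDimensional.of_isCompactOperator_id (𝕜 := ℝ) ⟨_, hpre, hS0⟩)

theorem stmt15 (a b : ℝ) (hab : a < b) (δ : ℝ) (hδ : δ ∈ Set.Ioo (0 : ℝ) 1)
    (L : C(Set.Icc a b, ℝ) →L[ℝ] C(Set.Icc a b, ℝ)) (hL : ‖L‖ ≤ 1)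
    (F : C(Set.Icc a b, ℝ) →L[ℝ] C(Set.Icc a b, ℝ))
    (hF : ∀ g : C(Set.Icc a b, ℝ), ‖g - F g‖ ≤ δ * ‖F g - L g‖) :
    (∀ g : C(Set.Icc a b, ℝ), (1 - δ) / (1 + δ) * ‖g‖ ≤ ‖F g‖) ∧
    ¬ IsCompactOperator (⇑F) := by
  obtain ⟨h0, h1⟩ := hδ
  have key : ∀ g : C(Set.Icc a b, ℝ), (1 - δ) * ‖g‖ ≤ (1 + δ) * ‖F g‖ := by
    intro g
    have hLg : ‖L g‖ ≤ ‖g‖ := by simpa using L.le_of_opNorm_le hL g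
    have hFL : ‖F g - L g‖ ≤ ‖F g‖ + ‖g‖ := (norm_sub_le _ _).trans (by gcongr)
    have hg : ‖g‖ ≤ ‖g - F g‖ + ‖F g‖ := by simpa using norm_add_le (g - F g) (F g)
    have := mul_le_mul_of_nonneg_left hFL h0.le
    linarith [hF g]
  refine ⟨fun g => ?_, ?_⟩
  · rw [div_mul_eq_mul_div, div_le_iff₀ (by linarith)]
    linarith [key g]
  · have hpos : 0 < 1 - δ := by linarith
    refine not_isCompactOperator_of_antilipschitz
      (not_finiteDimensional_continuousMap_Icc hab) F
      (K := ((1 + δ) / (1 - δ)).toNNReal) (F.antilipschitz_of_bound fun g => ?_)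
    rw [Real.coe_toNNReal _ (by positivity), div_mul_eq_mul_div, le_div_iff₀ hpos]
    linarith [key g]
end
end
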